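/- arXiv:1707.08720 — 2 statements merged into one kernel-verified Lean document; each statement's English description precedes it below -/
import Mathlib

section
/- Every alternating partition λ can be obtained from the empty partition by a finite sequence of operations, each of which is either a widening W or a deepening D, in such a way that every intermediate partition in the sequence is again an alternating partition. -/
/-- The widening operation: add 1 to every part. -/
def Wop (l : List ℕ) : List ℕ := l.map (· + 1)

/-- The deepening operation: add 1 to every part and append a new part equal to 1. -/
def Dop (l : List ℕ) : List ℕ := l.map (· + 1) ++ [1]

/-- A strict partition (strictly decreasing positive parts) which is alternating:
consecutive parts have opposite parity. -/
def AlternatingPartition (l : List ℕ) : Prop :=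
  l.Chain' (· > ·) ∧ (∀ x ∈ l, 0 < x) ∧ l.Chain' (fun a b => Odd (a + b))

/-!
Draw `λ` as a Young diagram with rows of lengths `λ₁ > λ₂ > ⋯`, and build it one column at a time,
starting from its rightmost column. A new leftmost column lengthens every row present so far; since
the rows have distinct lengths, it starts at most one new row. Hence each stage is a widening or a
deepening of the previous one. Each stage is alternating, because deleting the first `r` columns
shortens the surviving rows, which are consecutive, by the same amount `r`.
-/

/-- The partition whose Young diagram is that of `l` with its first `r` columns deleted: rows of
length at most `r` disappear and the others lose `r` boxes. In a decreasing list the surviving rows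
form an initial segment, whence `takeWhile`. -/
def dropColumns (r : ℕ) (l : List ℕ) : List ℕ :=
  (l.takeWhile (r < ·)).map (· - r)

section dropColumns

variable {r a : ℕ} {l : List ℕ}

theorem dropColumns_cons_of_lt (h : r < a) (l : List ℕ) :
    dropColumns r (a :: l) = (a - r) :: dropColumns r l := by
  simp [dropColumns, h]

theorem dropColumns_cons_of_le (h : a ≤ r) (l : List ℕ) : dropColumns r (a :: l) = [] := by
  simp [dropColumns, h]

theorem dropColumns_eq_nil (h : ∀ x ∈ l, x ≤ r) : dropColumns r l = [] := by
  cases l with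
  | nil => rfl
  | cons a l => exact dropColumns_cons_of_le (h a List.mem_cons_self) l

theorem dropColumns_headD (l : List ℕ) : dropColumns (l.headD 0) l = [] := by
  cases l with
  | nil => rfl
  | cons a l => exact dropColumns_cons_of_le le_rfl l

theorem dropColumns_zero (h : ∀ x ∈ l, 0 < x) : dropColumns 0 l = l := by
  have all_kept : l.takeWhile (0 < ·) = l := List.takeWhile_eq_self_iff.2 (by simpa using h)
  simp [dropColumns, all_kept]

theorem pos_of_mem_dropColumns {x : ℕ} (hx : x ∈ dropColumns r l) : 0 < x := by
  obtain ⟨y, hy, rfl⟩ := List.mem_map.1 hx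
  exact Nat.sub_pos_of_lt (by simpa using List.mem_takeWhile_imp hy)

theorem isChain_dropColumns {R S : ℕ → ℕ → Prop} (hl : l.IsChain R)
    (hRS : ∀ a b, r < a → r < b → R a b → S (a - r) (b - r)) :
    (dropColumns r l).IsChain S := by
  refine (List.isChain_map _).2 ((hl.prefix (List.takeWhile_prefix _)).imp_of_mem_imp ?_)
  intro a b ha hb hab
  exact hRS a b (by simpa using List.mem_takeWhile_imp ha)
    (by simpa using List.mem_takeWhile_imp hb) hab

theorem dropColumns_eq_wop_or_dop (hl : l.IsChain (· > ·)) (r : ℕ) :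
    dropColumns r l = Wop (dropColumns (r + 1) l) ∨
      dropColumns r l = Dop (dropColumns (r + 1) l) := by
  induction l with
  | nil => exact Or.inl rfl
  | cons a l ih =>
    rcases lt_trichotomy a (r + 1) with hlt | rfl | hgt
    · left
      rw [dropColumns_cons_of_le (by omega), dropColumns_cons_of_le (by omega)]
      rfl
    · right
      have rest_deleted : dropColumns r l = [] :=
        dropColumns_eq_nil fun x hx => Nat.le_of_lt_succ (hl.rel_cons hx)
      rw [dropColumns_cons_of_lt (by omega), dropColumns_cons_of_le le_rfl, rest_deleted]
      simp [Dop]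
    · have head_eq : a - r = a - (r + 1) + 1 := by omega
      rw [dropColumns_cons_of_lt (by omega), dropColumns_cons_of_lt hgt, head_eq]
      exact (ih hl.tail).imp (fun h => by rw [h]; rfl) (fun h => by rw [h]; rfl)

end dropColumns

theorem AlternatingPartition.dropColumns {l : List ℕ} (hl : AlternatingPartition l) (r : ℕ) :
    AlternatingPartition (dropColumns r l) := by
  obtain ⟨strict, -, alternating⟩ := hl
  refine ⟨isChain_dropColumns strict ?_, fun _ => pos_of_mem_dropColumns,
    isChain_dropColumns alternating ?_⟩
  · intro a b ha hb hab
    omega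
  · intro a b ha hb hab
    rw [Nat.odd_iff] at hab ⊢
    omega

/-- Every alternating partition can be obtained from the empty partition
by a finite sequence of widenings `W` and deepenings `D`, all of whose intermediate
partitions are alternating. -/
theorem stmt3 (L : List ℕ) (hL : AlternatingPartition L) :
    ∃ (q : ℕ) (seq : ℕ → List ℕ), seq 0 = [] ∧ seq q = L ∧
      ∀ i < q, (seq (i + 1) = Wop (seq i) ∨ seq (i + 1) = Dop (seq i)) ∧
        AlternatingPartition (seq (i + 1)) := by
  refine ⟨L.headD 0, fun i => dropColumns (L.headD 0 - i) L, dropColumns_headD L, ?_, ?_⟩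
  · simpa only [Nat.sub_self] using dropColumns_zero hL.2.1
  · intro i hi
    have columns_left : L.headD 0 - i = L.headD 0 - (i + 1) + 1 := by omega
    refine ⟨?_, hL.dropColumns _⟩
    simpa only [columns_left] using dropColumns_eq_wop_or_dop hL.1 (L.headD 0 - (i + 1))
end

section
/- Define θ_j ∈ ℚ² by θ_j = (j + 1, −j) if j is even and θ_j = (−j, j + 1) if j is odd, and let β = (2, −2) if n is odd and β = (−2, 2) if n is even. Let b ∈ ℚ, n ≥ 1, and define hinge points P_u(n) by P_{2s}(n) = (b/(n − 2s + 1))·θ_{n−2s} and P_{2s+1}(n) = (b/(n − 2s))·θ_{n−2s}. Then for every s ≥ 0 with n − 2s ≥ 1: P_{2s}(n) + b·β = P_{2s+1}(n+1) and P_{2s+1}(n) + b·β = P_{2s+2}(n+1). -/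
/-!
Neighbouring hubs of defect-0 weights differ by a multiple of the simple root hub:
`θ_{j+1} = θ_j + (j+1) β_j`, and, since `β_{j-1} = -β_j`, also `θ_{j-1} = θ_j + j β_j`.
Passing from `P_u(n)` to `P_{u+1}(n+1)` leaves the denominator `d = n - u + 1` unchanged and moves
the hub from `θ_{d-1}` to `θ_d` when `u` is even, from `θ_d` to `θ_{d-1}` when `u` is odd.
In both cases the hub changes by `d β_n`, and scaling by `b / d` turns this into `b β_n`.
-/

section Hubs

variable (K : Type*) [Ring K]

/-- The hub `θ_j` of the `j`-th defect-0 weight for `e = 2` and highest weight `Λ_0`, with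
coordinates in an arbitrary ring and `j` allowed to be negative. -/
def defectZeroHub (j : ℤ) : K × K :=
  if Even j then ((j : K) + 1, -(j : K)) else (-(j : K), (j : K) + 1)

/-- The hub `β` of the simple root `α_ε`, the translation step of the Littelmann operator `f_ε`;
the residue `ε` enters only through the parity of `n`. -/
def simpleRootHub (n : ℤ) : K × K :=
  if Odd n then (2, -2) else (-2, 2)

variable {K}

theorem defectZeroHub_of_even {j : ℤ} (hj : Even j) :
    defectZeroHub K j = ((j : K) + 1, -(j : K)) :=
  if_pos hj

theorem defectZeroHub_of_odd {j : ℤ} (hj : Odd j) :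
    defectZeroHub K j = (-(j : K), (j : K) + 1) :=
  if_neg (Int.not_even_iff_odd.mpr hj)

theorem simpleRootHub_of_odd {n : ℤ} (hn : Odd n) : simpleRootHub K n = (2, -2) :=
  if_pos hn

theorem simpleRootHub_of_even {n : ℤ} (hn : Even n) : simpleRootHub K n = (-2, 2) :=
  if_neg (Int.not_odd_iff_even.mpr hn)

theorem simpleRootHub_eq_of_even_sub {m n : ℤ} (h : Even (m - n)) :
    simpleRootHub K m = simpleRootHub K n := by
  have same_parity : Odd m ↔ Odd n := by
    simpa only [← Int.not_even_iff_odd, not_iff_not] using Int.even_sub.mp h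
  simp only [simpleRootHub, same_parity]

theorem simpleRootHub_sub_one (n : ℤ) : simpleRootHub K (n - 1) = -simpleRootHub K n := by
  rcases Int.even_or_odd n with hn | hn
  · rw [simpleRootHub_of_odd (hn.sub_odd odd_one), simpleRootHub_of_even hn, Prod.neg_mk, neg_neg]
  · rw [simpleRootHub_of_even (hn.sub_odd odd_one), simpleRootHub_of_odd hn, Prod.neg_mk, neg_neg]

theorem defectZeroHub_add_one (j : ℤ) :
    defectZeroHub K (j + 1) = defectZeroHub K j + ((j + 1 : ℤ) : K) • simpleRootHub K j := by
  rcases Int.even_or_odd j with hj | hj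
  · rw [defectZeroHub_of_odd hj.add_one, defectZeroHub_of_even hj, simpleRootHub_of_even hj,
      Prod.smul_mk, Prod.mk_add_mk, Int.cast_add, Int.cast_one, smul_eq_mul, smul_eq_mul]
    congr 1 <;> noncomm_ring
  · rw [defectZeroHub_of_even hj.add_one, defectZeroHub_of_odd hj, simpleRootHub_of_odd hj,
      Prod.smul_mk, Prod.mk_add_mk, Int.cast_add, Int.cast_one, smul_eq_mul, smul_eq_mul]
    congr 1 <;> noncomm_ring

theorem defectZeroHub_sub_one (j : ℤ) :
    defectZeroHub K (j - 1) = defectZeroHub K j + (j : K) • simpleRootHub K j := by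
  have step := defectZeroHub_add_one (K := K) (j - 1)
  rw [sub_add_cancel, simpleRootHub_sub_one, smul_neg] at step
  rw [step, neg_add_cancel_right]

end Hubs

section HingePoints

variable {K : Type*} [Field K]

/-- The hinge point `P_u(m)` of the Littelmann path of an alternating partition with segment
parameter `m`. For `u = 2s` and for `u = 2s + 1` the hub is `θ_{m-2s}`, and the denominators
`m - 2s + 1` and `m - 2s` are both `m - u + 1`. -/
def hingePoint (b : K) (m u : ℤ) : K × K :=
  if Even u then (b / ((m - u + 1 : ℤ) : K)) • defectZeroHub K (m - u)
  else (b / ((m - u + 1 : ℤ) : K)) • defectZeroHub K (m - u + 1)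

theorem div_smul_add_smul {M : Type*} [AddCommGroup M] [Module K M] (b : K) {d : K} (hd : d ≠ 0)
    (x y : M) : (b / d) • x + b • y = (b / d) • (x + d • y) := by
  rw [smul_add, smul_smul, div_mul_cancel₀ b hd]

theorem stmt9_general (b : K) (n u : ℤ) (hd : ((n - u + 1 : ℤ) : K) ≠ 0) :
    hingePoint b n u + b • simpleRootHub K n = hingePoint b (n + 1) (u + 1) := by
  have same_index : n + 1 - (u + 1) = n - u := add_sub_add_right_eq_sub n u 1
  rcases Int.even_or_odd u with hu | hu
  · have hβ : simpleRootHub K n = simpleRootHub K (n - u) :=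
      simpleRootHub_eq_of_even_sub (by rwa [sub_sub_cancel])
    have hu' : ¬Even (u + 1) := Int.not_even_iff_odd.mpr hu.add_one
    rw [hingePoint, if_pos hu, hingePoint, if_neg hu', same_index, hβ,
      div_smul_add_smul b hd, defectZeroHub_add_one]
  · have hβ : simpleRootHub K n = simpleRootHub K (n - u + 1) :=
      simpleRootHub_eq_of_even_sub (by
        rw [sub_add, sub_sub_cancel]
        exact hu.sub_odd odd_one)
    rw [hingePoint, if_neg (Int.not_even_iff_odd.mpr hu), hingePoint, if_pos hu.add_one,
      same_index, hβ, div_smul_add_smul b hd, ← defectZeroHub_sub_one, add_sub_cancel_right]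

end HingePoints

/-- acting by `f_ε^b` translates hinge points by `b·β`: with
`θ_j = (j+1, −j)` for `j` even and `(−j, j+1)` for `j` odd, `β = (2, −2)` for `n`
odd and `(−2, 2)` for `n` even, and hinge points `P_{2s}(m) = (b/(m−2s+1))θ_{m−2s}`,
`P_{2s+1}(m) = (b/(m−2s))θ_{m−2s}`, one has `P_{2s}(n) + bβ = P_{2s+1}(n+1)` and
`P_{2s+1}(n) + bβ = P_{2s+2}(n+1)` whenever `n − 2s ≥ 1`. -/
theorem stmt9 (b : ℚ) (n : ℤ) (hn : 1 ≤ n) :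
    let θ : ℤ → ℚ × ℚ := fun j =>
      if Even j then ((j : ℚ) + 1, -(j : ℚ)) else (-(j : ℚ), (j : ℚ) + 1)
    let β : ℚ × ℚ := if Odd n then ((2 : ℚ), (-2 : ℚ)) else ((-2 : ℚ), (2 : ℚ))
    -- hinge points: `P m u` is `P_u(m)`
    let P : ℤ → ℤ → ℚ × ℚ := fun m u =>
      if Even u then (b / ((m - u + 1 : ℤ) : ℚ)) • θ (m - u)
      else (b / ((m - u + 1 : ℤ) : ℚ)) • θ (m - u + 1)
    ∀ s : ℕ, 1 ≤ n - 2 * (s : ℤ) →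
      P n (2 * s) + b • β = P (n + 1) (2 * s + 1) ∧
      P n (2 * s + 1) + b • β = P (n + 1) (2 * s + 2) := by
  intro θ β P s hs
  have even_step := stmt9_general b n (2 * s) (Int.cast_ne_zero.mpr (by lia))
  have odd_step := stmt9_general b n (2 * s + 1) (Int.cast_ne_zero.mpr (by lia))
  rw [add_assoc (2 * (s : ℤ)), one_add_one_eq_two] at odd_step
  exact ⟨even_step, odd_step⟩
end
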